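/- Let n ≥ 7 and 1 < k < n/2 be integers, let d be the largest integer such that 1 + kd ≤ n, and suppose d divides k and d < k. Then the set {1, 1+(k-1)(d-1), 1+(k-1)d} is a minimal non-face of the van der Waerden complex vdW(n,k): it is not a face of vdW(n,k), but every proper subset of it is a face. -/

import Mathlib

/-- `F` is a face of the van der Waerden complex `vdW(n,k)`: `F` is contained in a
full arithmetic progression `{a, a+j, ..., a+kj}` with `a ≥ 1`, `j ≥ 1`, `a + kj ≤ n`. -/
def vdwFace (n k : ℕ) (F : Finset ℕ) : Prop :=
  ∃ a j : ℕ, 1 ≤ a ∧ 1 ≤ j ∧ a + k * j ≤ n ∧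
    F ⊆ (Finset.range (k + 1)).image (fun i => a + i * j)

/-- A facet of `vdW(n,k)` is a face that is maximal under inclusion. -/
def vdwFacet (n k : ℕ) (F : Finset ℕ) : Prop :=
  vdwFace n k F ∧ ∀ G : Finset ℕ, vdwFace n k G → F ⊆ G → F = G

/-- `S` is a minimal non-face of `vdW(n,k)`: a subset of the vertex set `{1,...,n}`
that is not a face, but all of whose proper subsets are faces. -/
def vdwMinNonFace (n k : ℕ) (S : Finset ℕ) : Prop :=
  S ⊆ Finset.Icc 1 n ∧ ¬ vdwFace n k S ∧ ∀ T : Finset ℕ, T ⊂ S → vdwFace n k T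

/-! A progression through the three points has a common difference `j ≤ d`, and `j` divides the
difference `k - 1` of the last two points. As the points span a length of `(k - 1) * d ≤ k * j`, we
get `(k - 1) * (d - j) ≤ j ≤ k - 1`; so either `j = d`, and then `d ∣ k - 1`, or `j = k - 1` and
`d = k`. When `d` divides `k` and `1 < d < k`, both alternatives fail. Any two of the points lie in
a progression, of common difference `d - 1`, `d` or `1`. -/

section Faces

variable {n k : ℕ} {F G : Finset ℕ}

theorem vdwFace_iff : vdwFace n k F ↔
    ∃ a j : ℕ, 1 ≤ a ∧ 1 ≤ j ∧ a + k * j ≤ n ∧ ∀ x ∈ F, ∃ i ≤ k, a + i * j = x := by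
  simp only [vdwFace, Finset.subset_iff, Finset.mem_image, Finset.mem_range, Nat.lt_succ_iff]

theorem vdwFace.mono (hG : vdwFace n k G) (hFG : F ⊆ G) : vdwFace n k F := by
  obtain ⟨a, j, ha, hj, hn, hsub⟩ := hG
  exact ⟨a, j, ha, hj, hn, hFG.trans hsub⟩

theorem vdwFace.subset_Icc (hF : vdwFace n k F) : F ⊆ Finset.Icc 1 n := by
  obtain ⟨a, j, ha, -, hn, hmem⟩ := vdwFace_iff.1 hF
  intro x hx
  obtain ⟨i, hi, rfl⟩ := hmem x hx
  have hij : i * j ≤ k * j := Nat.mul_le_mul_right j hi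
  exact Finset.mem_Icc.2 ⟨by lia, by lia⟩

theorem vdwFace.exists_step (hF : vdwFace n k F) :
    ∃ j : ℕ, 1 + k * j ≤ n ∧ ∀ x ∈ F, ∀ y ∈ F, j ∣ y - x ∧ y - x ≤ k * j := by
  obtain ⟨a, j, ha, -, hn, hmem⟩ := vdwFace_iff.1 hF
  refine ⟨j, by lia, fun x hx y hy => ?_⟩
  obtain ⟨p, -, rfl⟩ := hmem x hx
  obtain ⟨q, hq, rfl⟩ := hmem y hy
  rw [Nat.add_sub_add_left, ← Nat.sub_mul]
  exact ⟨dvd_mul_left j (q - p), Nat.mul_le_mul_right j ((Nat.sub_le q p).trans hq)⟩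

theorem vdwFace_pair {a i j : ℕ} (ha : 1 ≤ a) (hj : 1 ≤ j) (hn : a + k * j ≤ n) (hi : i ≤ k) :
    vdwFace n k {a, a + i * j} := by
  refine vdwFace_iff.2 ⟨a, j, ha, hj, hn, ?_⟩
  simpa using ⟨⟨0, by simp⟩, ⟨i, hi, by simp⟩⟩

theorem vdwMinNonFace_triple_iff {x y z : ℕ} (hxy : vdwFace n k {x, y})
    (hxz : vdwFace n k {x, z}) (hyz : vdwFace n k {y, z}) :
    vdwMinNonFace n k {x, y, z} ↔ ¬ vdwFace n k {x, y, z} := by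
  refine ⟨fun h => h.2.1, fun h => ⟨?_, h, fun T hT => ?_⟩⟩
  · exact Finset.insert_subset (hxy.subset_Icc (by simp)) hyz.subset_Icc
  · obtain ⟨w, hw, hwT⟩ := Finset.exists_of_ssubset hT
    have hTw : T ⊆ ({x, y, z} : Finset ℕ).erase w :=
      Finset.subset_erase.2 ⟨hT.subset, hwT⟩
    simp only [Finset.mem_insert, Finset.mem_singleton] at hw
    rcases hw with rfl | rfl | rfl
    · exact hyz.mono (hTw.trans (by grind))
    · exact hxz.mono (hTw.trans (by grind))
    · exact hxy.mono (hTw.trans (by grind))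

end Faces

section Arithmetic

variable {k d : ℕ}

theorem eq_add_one_or_dvd_of_dvd_of_mul_le {j : ℕ} (hjd : j ≤ d) (hjk : j ∣ k)
    (hle : k * d ≤ (k + 1) * j) : d = k + 1 ∨ d ∣ k := by
  rcases hjd.eq_or_lt with rfl | hlt
  · exact Or.inr hjk
  rcases k.eq_zero_or_pos with rfl | hk
  · exact Or.inr (dvd_zero d)
  have hj_le : j ≤ k := Nat.le_of_dvd hk hjk
  obtain ⟨m, rfl⟩ := Nat.exists_eq_add_of_lt hlt
  have hkm : k * (m + 1) ≤ j := by linarith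
  have hm : m + 1 ≤ 1 := Nat.le_of_mul_le_mul_left (by lia : k * (m + 1) ≤ k * 1) hk
  obtain rfl : m = 0 := by lia
  lia

theorem not_dvd_sub_one_of_dvd (hd : d ≠ 1) (hk : 1 ≤ k) (hdk : d ∣ k) : ¬ d ∣ k - 1 := by
  rwa [Nat.dvd_sub_iff_right hk hdk, Nat.dvd_one]

end Arithmetic

section Triple

-- In this section `k + 1` and `d + 1` stand for the `k` and `d` of the triple in `vdW(n,k)`, which
-- avoids truncated subtraction.
variable {n k d : ℕ}

theorem vdwFace_triple_of_succ_dvd (hn : 1 + (k + 1) * (d + 1) ≤ n) (hdk : d + 1 ∣ k) :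
    vdwFace n (k + 1) {1, 1 + k * d, 1 + k * (d + 1)} := by
  obtain ⟨c, rfl⟩ := hdk
  refine vdwFace_iff.2 ⟨1, d + 1, le_rfl, by simp, hn, ?_⟩
  simp only [Finset.mem_insert, Finset.mem_singleton, forall_eq_or_imp, forall_eq]
  exact ⟨⟨0, by simp⟩, ⟨c * d, by nlinarith, by ring⟩, ⟨(d + 1) * c, by simp, rfl⟩⟩

theorem vdwFace_triple_self (hk : 1 ≤ k) (hn : 1 + (k + 1) * k ≤ n) :
    vdwFace n (k + 1) {1, 1 + k * k, 1 + k * (k + 1)} := by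
  refine vdwFace_iff.2 ⟨1, k, le_rfl, hk, hn, ?_⟩
  simp only [Finset.mem_insert, Finset.mem_singleton, forall_eq_or_imp, forall_eq]
  exact ⟨⟨0, by simp⟩, ⟨k, by simp⟩, ⟨k + 1, by simp, by ring⟩⟩

theorem vdwFace_triple_iff (hd : IsGreatest {e | 1 + (k + 1) * e ≤ n} (d + 1)) :
    vdwFace n (k + 1) {1, 1 + k * d, 1 + k * (d + 1)} ↔ d + 1 = k + 1 ∨ d + 1 ∣ k := by
  constructor
  · intro hF
    obtain ⟨j, hjn, hstep⟩ := hF.exists_step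
    have hjk : j ∣ k := by
      simpa [Nat.add_sub_add_left, ← Nat.mul_sub] using
        (hstep (1 + k * d) (by simp) (1 + k * (d + 1)) (by simp)).1
    have hle : k * (d + 1) ≤ (k + 1) * j := by
      simpa using (hstep 1 (by simp) (1 + k * (d + 1)) (by simp)).2
    exact eq_add_one_or_dvd_of_dvd_of_mul_le (hd.2 hjn) hjk hle
  · rintro (hdk | hdk)
    · obtain rfl : d = k := Nat.succ_injective hdk
      have hn : 1 + (d + 1) * (d + 1) ≤ n := hd.1
      rcases d.eq_zero_or_pos with rfl | hpos
      · exact vdwFace_triple_of_succ_dvd hn (dvd_zero _)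
      · exact vdwFace_triple_self hpos (by lia)
    · exact vdwFace_triple_of_succ_dvd hd.1 hdk

theorem vdwMinNonFace_triple_iff_not_vdwFace (hn : 1 + (k + 1) * (d + 1) ≤ n) :
    vdwMinNonFace n (k + 1) {1, 1 + k * d, 1 + k * (d + 1)} ↔
      ¬ vdwFace n (k + 1) {1, 1 + k * d, 1 + k * (d + 1)} := by
  have first_second : vdwFace n (k + 1) {1, 1 + k * d} := by
    rcases d.eq_zero_or_pos with rfl | hd
    · exact vdwFace_pair (i := 0) (j := 1) le_rfl le_rfl (by lia) (by simp)
    · exact vdwFace_pair le_rfl hd (by lia) (by simp)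
  have first_third : vdwFace n (k + 1) {1, 1 + k * (d + 1)} :=
    vdwFace_pair le_rfl (by simp) hn (by simp)
  have second_third : vdwFace n (k + 1) {1 + k * d, 1 + k * (d + 1)} := by
    rw [show 1 + k * (d + 1) = 1 + k * d + k * 1 by ring]
    exact vdwFace_pair (by simp) le_rfl (by lia) (by simp)
  exact vdwMinNonFace_triple_iff first_second first_third second_third

end Triple

theorem vdW_minimal_nonface_dvd_lt_general (n k d : ℕ) (hkn : k < n)
    (hd : IsGreatest {e | 1 + k * e ≤ n} d) :
    vdwMinNonFace n k {1, 1 + (k - 1) * (d - 1), 1 + (k - 1) * d} ↔ d ≠ k ∧ ¬ d ∣ k - 1 := by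
  have hd_pos : 1 ≤ d := hd.2 (show 1 + k * 1 ≤ n by lia)
  have hk_pos : 1 ≤ k := by
    refine Nat.one_le_iff_ne_zero.2 ?_
    rintro rfl
    exact absurd (hd.2 (show 1 + 0 * (d + 1) ≤ n by lia)) (by simp)
  obtain ⟨l, rfl⟩ := Nat.exists_eq_add_of_le' hk_pos
  obtain ⟨m, rfl⟩ := Nat.exists_eq_add_of_le' hd_pos
  simp only [Nat.add_sub_cancel]
  rw [vdwMinNonFace_triple_iff_not_vdwFace hd.1, vdwFace_triple_iff hd, not_or]

/-- For `n ≥ 7`, `1 < k < n/2`, `d` the largest integer with `1 + kd ≤ n`, `d ∣ k`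
and `d < k`, the set `{1, 1+(k-1)(d-1), 1+(k-1)d}` is a minimal non-face of `vdW(n,k)`. -/
theorem vdW_minimal_nonface_dvd_lt (n k d : ℕ) (hn : 7 ≤ n) (hk : 1 < k) (hkn : 2 * k < n)
    (hd : 1 + k * d ≤ n ∧ ∀ e : ℕ, 1 + k * e ≤ n → e ≤ d) (hdvd : d ∣ k) (hdk : d < k) :
    vdwMinNonFace n k {1, 1 + (k - 1) * (d - 1), 1 + (k - 1) * d} := by
  have hd_two : 2 ≤ d := hd.2 2 (by lia)
  exact (vdW_minimal_nonface_dvd_lt_general n k d (by lia) hd).2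
    ⟨hdk.ne, not_dvd_sub_one_of_dvd (by lia) (by lia) hdvd⟩
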